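/- (The cycloid solves the brachistochrone problem.) Let g > 0 and c > 0. Define F on (ℝ × ℝ) × (ℝ × ℝ), writing the variables as ((x, y), (ẋ, ẏ)), by F((x, y), (ẋ, ẏ)) := √((ẋ² + ẏ²)/(2·g·y)) (via the real square root; values for y ≤ 0 are irrelevant). Define the cycloid σ : ℝ → ℝ² by σ(θ) := (c·(θ − sin θ), c·(1 − cos θ)). Then for every θ ∈ (0, π) the Euler–Lagrange covector of F along σ vanishes: E(θ) = 0, where E(θ)(h) := (D_x(D_yF)(σ(θ), σ′(θ))(h))(σ′(θ)) − d/dθ [D_yF(σ(θ), σ′(θ))(h)]. In particular, along σ the momentum component ∂F/∂ẋ(σ(θ), σ′(θ)) is constant in θ, equal to 1/(2·√(g·c)). -/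

import Mathlib

/-- The Euler–Lagrange covector of a Lagrangian `F` on `(ℝ × ℝ) × (ℝ × ℝ)` along a curve
`σ : ℝ → ℝ × ℝ`, evaluated at parameter `θ` on the test vector `h`. -/
noncomputable def eulerLagrange
    (F : (ℝ × ℝ) × (ℝ × ℝ) → ℝ) (σ : ℝ → ℝ × ℝ) (θ : ℝ) (h : ℝ × ℝ) : ℝ :=
  (fderiv ℝ (fun x => fderiv ℝ (fun y => F (x, y)) (deriv σ θ)) (σ θ)) h (deriv σ θ)
    - deriv (fun s => fderiv ℝ (fun y => F (σ s, y)) (deriv σ s) h) θ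

theorem brach_fderiv (a : ℝ) (ha : 0 < a) (v : ℝ × ℝ) (hv : 0 < v.1) :
    fderiv ℝ (fun v : ℝ × ℝ => Real.sqrt ((v.1 ^ 2 + v.2 ^ 2) / a)) v =
      (Real.sqrt ((v.1 ^ 2 + v.2 ^ 2) / a) * a)⁻¹ •
        (v.1 • ContinuousLinearMap.fst ℝ ℝ ℝ + v.2 • ContinuousLinearMap.snd ℝ ℝ ℝ) := by
  have hpos : 0 < (v.1 ^ 2 + v.2 ^ 2) / a := by positivity
  have h1 : HasFDerivAt (fun v : ℝ × ℝ => v.1) (ContinuousLinearMap.fst ℝ ℝ ℝ) v := hasFDerivAt_fst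
  have h2 : HasFDerivAt (fun v : ℝ × ℝ => v.2) (ContinuousLinearMap.snd ℝ ℝ ℝ) v := hasFDerivAt_snd
  have h3 := (((h1.pow 2).add (h2.pow 2)).mul_const a⁻¹).sqrt (by
    simpa [div_eq_mul_inv] using hpos.ne')
  have h4 : HasFDerivAt (fun v : ℝ × ℝ => Real.sqrt ((v.1 ^ 2 + v.2 ^ 2) / a)) _ v := h3
  rw [h4.fderiv]
  have hs : 0 < Real.sqrt ((v.1 ^ 2 + v.2 ^ 2) / a) := Real.sqrt_pos.mpr hpos
  rw [div_eq_mul_inv] at hs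
  ext <;> simp [div_eq_mul_inv] <;> field_simp

theorem brach_coef (g w y : ℝ) (hg : 0 < g) (hw : 0 < w) (hy : 0 < y) :
    HasDerivAt (fun y : ℝ => (Real.sqrt (w / (2 * g * y)) * (2 * g * y))⁻¹)
      (-(Real.sqrt (w / (2 * g * y)) * (2 * g * y))⁻¹ / (2 * y)) y := by
  have hpos : 0 < w / (2 * g * y) := by positivity
  have hl : HasDerivAt (fun y : ℝ => 2 * g * y) (2 * g) y := by
    simpa using (hasDerivAt_id y).const_mul (2 * g)
  have h1 := (((hl.inv (by positivity)).const_mul w).sqrt (by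
    simpa [div_eq_mul_inv] using hpos.ne'))
  have hs : 0 < Real.sqrt (w / (2 * g * y)) := Real.sqrt_pos.mpr hpos
  have h2 := (h1.mul hl).inv (by
    have : 0 < Real.sqrt (w / (2 * g * y)) * (2 * g * y) := by positivity
    simpa [div_eq_mul_inv] using this.ne')
  refine HasDerivAt.congr_deriv (f := fun y : ℝ => (Real.sqrt (w / (2 * g * y)) * (2 * g * y))⁻¹) h2 ?_
  have hq : Real.sqrt (w / (2 * g * y)) ^ 2 = w / (2 * g * y) := Real.sq_sqrt hpos.le
  simp only [Pi.mul_apply, Pi.inv_apply, ← div_eq_mul_inv]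
  generalize Real.sqrt (w / (2 * g * y)) = S at *
  have hw' : w = S ^ 2 * (2 * g * y) := by rw [hq]; field_simp
  subst hw'
  field_simp
  ring

/-- **The cycloid solves the brachistochrone problem.**  For the brachistochrone Finsler
function `F((x,y),(ẋ,ẏ)) = √((ẋ² + ẏ²)/(2gy))`, the cycloid
`σ(θ) = (c(θ − sin θ), c(1 − cos θ))` satisfies the Euler–Lagrange equations for every
`θ ∈ (0, π)`, and along it the momentum `∂F/∂ẋ` is constant, equal to `1/(2√(gc))`. -/
theorem cycloid_solves_brachistochrone
    (g c : ℝ) (hg : 0 < g) (hc : 0 < c)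
    (F : (ℝ × ℝ) × (ℝ × ℝ) → ℝ)
    (hFdef : ∀ (p v : ℝ × ℝ), F (p, v) = Real.sqrt ((v.1 ^ 2 + v.2 ^ 2) / (2 * g * p.2)))
    (σ : ℝ → ℝ × ℝ)
    (hσdef : ∀ θ : ℝ, σ θ = (c * (θ - Real.sin θ), c * (1 - Real.cos θ))) :
    (∀ θ ∈ Set.Ioo (0 : ℝ) Real.pi, ∀ h : ℝ × ℝ, eulerLagrange F σ θ h = 0)
      ∧ (∀ θ ∈ Set.Ioo (0 : ℝ) Real.pi,
          fderiv ℝ (fun v => F (σ θ, v)) (deriv σ θ) ((1 : ℝ), (0 : ℝ)) =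
            1 / (2 * Real.sqrt (g * c))) := by
  have hσ : σ = fun θ => (c * (θ - Real.sin θ), c * (1 - Real.cos θ)) := funext hσdef
  have hF : F = fun q => Real.sqrt ((q.2.1 ^ 2 + q.2.2 ^ 2) / (2 * g * q.1.2)) := by
    funext q; exact hFdef q.1 q.2
  have hdσ : ∀ θ, deriv σ θ = (c * (1 - Real.cos θ), c * Real.sin θ) := by
    intro θ
    rw [hσ]
    have h1 : HasDerivAt (fun θ => c * (θ - Real.sin θ)) (c * (1 - Real.cos θ)) θ :=
      ((hasDerivAt_id θ).sub (Real.hasDerivAt_sin θ)).const_mul c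
    have h2 : HasDerivAt (fun θ => c * (1 - Real.cos θ)) (c * Real.sin θ) θ := by
      simpa using ((hasDerivAt_const θ (1 : ℝ)).sub (Real.hasDerivAt_cos θ)).const_mul c
    exact (h1.prodMk h2).deriv
  have hcos : ∀ θ ∈ Set.Ioo (0 : ℝ) Real.pi, 0 < 1 - Real.cos θ := by
    intro θ hθ
    have := Real.cos_lt_cos_of_nonneg_of_le_pi le_rfl hθ.2.le hθ.1
    rw [Real.cos_zero] at this
    linarith
  have hr : 0 < Real.sqrt (g * c) := Real.sqrt_pos.mpr (by positivity)
  have hr2 : Real.sqrt (g * c) ^ 2 = g * c := Real.sq_sqrt (by positivity)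
  have hS : ∀ θ ∈ Set.Ioo (0 : ℝ) Real.pi,
      Real.sqrt (((c * (1 - Real.cos θ)) ^ 2 + (c * Real.sin θ) ^ 2) /
        (2 * g * (c * (1 - Real.cos θ)))) = Real.sqrt (g * c) / g := by
    intro θ hθ
    have h0 := hcos θ hθ
    rw [Real.sqrt_eq_iff_mul_self_eq_of_pos (by positivity), ← sq, div_pow, hr2, mul_pow c (Real.sin θ), Real.sin_sq]
    field_simp
    ring
  have hD : ∀ θ ∈ Set.Ioo (0 : ℝ) Real.pi, ∀ h : ℝ × ℝ,
      fderiv ℝ (fun v => F (σ θ, v)) (deriv σ θ) h =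
        (h.1 + Real.sin θ / (1 - Real.cos θ) * h.2) / (2 * Real.sqrt (g * c)) := by
    intro θ hθ h
    have h0 := hcos θ hθ
    rw [hdσ, hF, hσ]
    simp only
    rw [brach_fderiv _ (by positivity) _ (by simp only; positivity)]
    simp only
    rw [hS θ hθ]
    simp
    field_simp
  refine ⟨?_, ?_⟩
  · intro θ hθ h
    have h0 := hcos θ hθ
    unfold eulerLagrange
    have hd : HasDerivAt (fun s => fderiv ℝ (fun y => F (σ s, y)) (deriv σ s) h)
        (-(1 / (1 - Real.cos θ)) * h.2 / (2 * Real.sqrt (g * c))) θ := by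
      have h2 : HasDerivAt (fun θ => 1 - Real.cos θ) (Real.sin θ) θ := by
        simpa using (Real.hasDerivAt_cos θ).const_sub 1
      have h3 := ((((Real.hasDerivAt_sin θ).div h2 h0.ne').mul_const h.2).const_add h.1).div_const
        (2 * Real.sqrt (g * c))
      refine HasDerivAt.congr_of_eventuallyEq (h3.congr_deriv ?_) ?_
      · have : Real.cos θ * (1 - Real.cos θ) - Real.sin θ * Real.sin θ = -(1 - Real.cos θ) := by
          nlinarith [Real.sin_sq_add_cos_sq θ]
        rw [this]
        field_simp
      · filter_upwards [isOpen_Ioo.mem_nhds hθ] with s hs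
        exact hD s hs h
    rw [hd.deriv]
    have hv : 0 < (deriv σ θ).1 := by rw [hdσ]; simp only; positivity
    have hy : 0 < (σ θ).2 := by rw [hσ]; simp only; positivity
    have hw : 0 < (deriv σ θ).1 ^ 2 + (deriv σ θ).2 ^ 2 := by positivity
    have hk := (brach_coef g _ _ hg hw hy).comp_hasFDerivAt (σ θ)
      (hasFDerivAt_snd (𝕜 := ℝ) (E := ℝ) (F := ℝ) (p := σ θ))
    have hk2 := hk.smul_const ((deriv σ θ).1 • ContinuousLinearMap.fst ℝ ℝ ℝ +
      (deriv σ θ).2 • ContinuousLinearMap.snd ℝ ℝ ℝ)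
    have hk3 := hk2.congr_of_eventuallyEq
      (f₁ := fun x => fderiv ℝ (fun y => F (x, y)) (deriv σ θ)) (by
        have ho : ∀ᶠ x : ℝ × ℝ in nhds (σ θ), 0 < x.2 :=
          continuous_snd.continuousAt.eventually (lt_mem_nhds hy)
        filter_upwards [ho] with x hx
        rw [hF]
        exact brach_fderiv (2 * g * x.2) (by positivity) _ hv)
    rw [hk3.fderiv, hdσ, hσ]
    simp only
    rw [hS θ hθ]
    simp
    have hss : Real.sin θ ^ 2 = (1 - Real.cos θ) * (1 + Real.cos θ) := by
      rw [Real.sin_sq]; ring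
    field_simp
    rw [hss]
    ring
  · intro θ hθ
    rw [hD θ hθ]
    simp
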